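/- arXiv:2112.15467 — 2 statements merged into one kernel-verified Lean document; each statement's English description precedes it below -/
import Mathlib

section
/- A finite group all of whose Sylow subgroups are cyclic is metacyclic: it is an extension of a cyclic group by a cyclic group of coprime order. More precisely, such a group G satisfies G = B ⋊ A with B and A cyclic of coprime orders. -/
/-!
Burnside's transfer at the smallest prime divisor of the order shows that a finite group `G` with
cyclic Sylow subgroups is solvable. Its abelianization is cyclic, being the product of its cyclic
Sylow subgroups. If `G''` is cyclic, then `Aut(G'')` is abelian, so `G'` centralizes `G''`; as
`G' / G''` is cyclic, `G'` is abelian and hence cyclic. Since the derived series reaches `1`, it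
follows by induction that `G'` is cyclic. Transfer also shows that no prime divides both `|G'|` and
`[G : G']`, so `G'` has a complement by Schur–Zassenhaus, and this complement is isomorphic to
`G / G'`.
-/

theorem isCyclic_of_isComplement' {G : Type*} [Group G] {N A : Subgroup G} [N.Normal]
    [IsCyclic (G ⧸ N)] (hNA : N.IsComplement' A) : IsCyclic A :=
  isCyclic_of_surjective hNA.symm.QuotientMulEquiv hNA.symm.QuotientMulEquiv.surjective

theorem exists_isComplement'_isCyclic_of_coprime {G : Type*} [Group G] {N : Subgroup G} [N.Normal]
    [IsCyclic (G ⧸ N)] (hN : (Nat.card N).Coprime N.index) :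
    ∃ A : Subgroup G, N.IsComplement' A ∧ IsCyclic A ∧ (Nat.card N).Coprime (Nat.card A) := by
  obtain ⟨A, hNA⟩ := Subgroup.exists_right_complement'_of_coprime hN
  exact ⟨A, hNA, isCyclic_of_isComplement' hNA, hNA.symm.index_eq_card ▸ hN⟩

/-- A finite group all of whose Sylow subgroups are cyclic is a semidirect product
`B ⋊ A` of cyclic subgroups `B`, `A` of coprime orders, with `B` normal. -/
theorem stmt4 {G : Type*} [Group G] [Finite G]
    (h : ∀ (p : ℕ), p.Prime → ∀ P : Sylow p G, IsCyclic P) :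
    ∃ B A : Subgroup G, B.Normal ∧ IsCyclic B ∧ IsCyclic A ∧
      Nat.Coprime (Nat.card B) (Nat.card A) ∧ B ⊓ A = ⊥ ∧ B ⊔ A = ⊤ := by
  have : IsZGroup G := ⟨h⟩
  have : IsCyclic (G ⧸ commutator G) := IsZGroup.isCyclic_abelianization
  obtain ⟨A, hA, hA_cyclic, h_coprime⟩ :=
    exists_isComplement'_isCyclic_of_coprime (IsZGroup.coprime_commutator_index G)
  exact ⟨commutator G, A, inferInstance, IsZGroup.isCyclic_commutator G, hA_cyclic, h_coprime,
    hA.disjoint.eq_bot, hA.sup_eq_top⟩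
end

section
/- Let G be a finite group in which every abelian subgroup is cyclic, no element has order 4, and every element has prime power order. Then G ≅ C_P ⋊ C_Q where P and Q are coprime, each equal to 1, 2, or an odd prime power, and C_Q acts faithfully on C_P. -/
/-!
The crux is that a finite `p`-group with `p` odd, all of whose subgroups of order `p ^ 2` are
cyclic, is itself cyclic. In a minimal counterexample there are two distinct subgroups `M` and `N`
of index `p`, and both are cyclic. Then `M ⊓ N` is central, of index `p ^ 2`, and contains every
commutator and every `p`-th power. Since `p` is odd, class two makes `g ↦ g ^ p` a homomorphism;
its image lies in `M ⊓ N`, so its kernel has at least `p ^ 2` elements, all of order dividing `p`.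

For `p = 2` the absence of elements of order `4` bounds a Sylow subgroup by order `2`. So every
Sylow subgroup is cyclic, and hence `commutator G` is a cyclic Hall subgroup with a cyclic
complement. If an element `b` of the complement centralizes a generator `a ≠ 1` of `commutator G`,
then `a * b` has order `orderOf a * orderOf b`, a product of coprime numbers; this is a prime power
only if `b = 1`.
-/

open Subgroup
open scoped commutatorElement

section ClassTwo

theorem mul_pow_eq_pow_choose_two_mul {M : Type*} [Monoid M] {x y c : M} (hx : Commute c x)
    (hy : Commute c y) (hyx : y * x = c * x * y) (n : ℕ) :
    (x * y) ^ n = c ^ n.choose 2 * (x ^ n * y ^ n) := by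
  induction n with
  | zero => simp
  | succ n ih =>
    have hxyc : x * y * c ^ n.choose 2 = c ^ n.choose 2 * (x * y) :=
      ((hx.mul_right hy).pow_left _).symm.eq
    have hyxn : y * x ^ n = c ^ n * x ^ n * y := by
      rw [← hx.mul_pow]
      exact SemiconjBy.pow_right hyx n
    have hxc : x * c ^ n = c ^ n * x := (hx.pow_left n).symm.eq
    calc (x * y) ^ (n + 1)
        = x * y * c ^ n.choose 2 * (x ^ n * y ^ n) := by rw [pow_succ', ih, mul_assoc (x * y)]
      _ = c ^ n.choose 2 * (x * (y * x ^ n) * y ^ n) := by rw [hxyc]; simp only [mul_assoc]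
      _ = c ^ n.choose 2 * (x * c ^ n * (x ^ n * y * y ^ n)) := by
        rw [hyxn]; simp only [mul_assoc]
      _ = c ^ (n.choose 2 + n) * (x * x ^ n * (y * y ^ n)) := by
        rw [hxc, pow_add]; simp only [mul_assoc]
      _ = c ^ (n + 1).choose 2 * (x ^ (n + 1) * y ^ (n + 1)) := by
        rw [← pow_succ', ← pow_succ', Nat.choose_succ_succ' n 1, Nat.choose_one_right,
          add_comm (n.choose 2) n]

theorem dvd_choose_two_of_odd {n : ℕ} (hn : Odd n) : n ∣ n.choose 2 := by
  obtain ⟨k, rfl⟩ := hn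
  refine ⟨k, ?_⟩
  rw [Nat.choose_two_right, Nat.add_sub_cancel, mul_left_comm, Nat.mul_div_cancel_left _ two_pos]

variable {G : Type*} [Group G]

theorem commutatorElement_pow_eq_one {x y : G} {n : ℕ} (hc : Commute ⁅x, y⁆ y)
    (hxy : Commute x (y ^ n)) : ⁅x, y⁆ ^ n = 1 := by
  have hconj : (⁅x, y⁆ * y) ^ n = y ^ n := by
    rw [commutatorElement_def, inv_mul_cancel_right, conj_pow, hxy.eq, mul_inv_cancel_right]
  rwa [hc.mul_pow, mul_eq_right] at hconj

theorem mul_pow_of_commutator_le_center {n : ℕ} (hn : Odd n) (hG : commutator G ≤ center G)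
    (hpow : ∀ g : G, g ^ n ∈ center G) (x y : G) : (x * y) ^ n = x ^ n * y ^ n := by
  have hc (g : G) : Commute ⁅y, x⁆ g :=
    (mem_center_iff.mp (hG (commutator_mem_commutator (mem_top y) (mem_top x))) g).symm
  have hyx : y * x = ⁅y, x⁆ * x * y := by rw [commutatorElement_def]; group
  obtain ⟨k, hk⟩ := dvd_choose_two_of_odd hn
  rw [mul_pow_eq_pow_choose_two_mul (hc x) (hc y) hyx, hk, pow_mul,
    commutatorElement_pow_eq_one (hc x) (mem_center_iff.mp (hpow x) y), one_pow, one_mul]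

end ClassTwo

section Subgroups

variable {G : Type*} [Group G]

theorem inf_le_center_of_sup_eq_top {M N : Subgroup G} [IsMulCommutative M] [IsMulCommutative N]
    (hMN : M ⊔ N = ⊤) : M ⊓ N ≤ center G := by
  rw [← SetLike.coe_subset_coe, ← centralizer_eq_top_iff_subset, eq_top_iff, ← hMN]
  exact sup_le (M.le_centralizer.trans (centralizer_le inf_le_left))
    (N.le_centralizer.trans (centralizer_le inf_le_right))

theorem commutator_le_inf_of_sup_eq_top {M N : Subgroup G} [M.Normal] [N.Normal]
    [IsMulCommutative M] [IsMulCommutative N] (hMN : M ⊔ N = ⊤) : commutator G ≤ M ⊓ N :=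
  le_inf (Normal.commutator_le_of_self_sup_commutative_eq_top hMN inferInstance)
    (Normal.commutator_le_of_self_sup_commutative_eq_top (sup_comm M N ▸ hMN) inferInstance)

theorem index_inf_eq_mul_of_sup_eq_top {M N : Subgroup G} [M.Normal] (hMN : M ⊔ N = ⊤) :
    (M ⊓ N).index = M.index * N.index := by
  rw [← relIndex_mul_index (inf_le_right : M ⊓ N ≤ N), inf_relIndex_right, ← relIndex_sup_left,
    hMN, relIndex_top_right]

theorem isCoatom_of_index_prime {M : Subgroup G} (hM : M.index.Prime) : IsCoatom M := by
  refine ⟨fun h => hM.ne_one (index_eq_one.mpr h), fun K hMK => ?_⟩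
  have hmul := relIndex_mul_index hMK.le
  rcases (Nat.dvd_prime hM).mp (Dvd.intro_left _ hmul) with h | h
  · exact index_eq_one.mp h
  · rw [h, Nat.mul_eq_right hM.ne_zero, relIndex_eq_one] at hmul
    exact absurd hmul hMK.not_ge

theorem index_dvd_card_ker_of_range_le [Finite G] {f : G →* G} {K : Subgroup G}
    (hf : f.range ≤ K) : K.index ∣ Nat.card f.ker := by
  refine (index_dvd_of_le hf).trans (dvd_of_eq ?_)
  apply Nat.eq_of_mul_eq_mul_left (Nat.card_pos : 0 < Nat.card f.range)
  rw [card_mul_index, ← index_ker, mul_comm, card_mul_index]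

theorem isCyclic_subgroup_of_forall_card_eq {n : ℕ}
    (h : ∀ K : Subgroup G, Nat.card K = n → IsCyclic K) {H : Subgroup G} (K : Subgroup H)
    (hK : Nat.card K = n) : IsCyclic K :=
  have e := K.equivMapOfInjective H.subtype H.subtype_injective
  have : IsCyclic (K.map H.subtype) := h _ (by rw [← Nat.card_congr e.toEquiv, hK])
  isCyclic_of_injective e.toMonoidHom e.injective

end Subgroups

section PGroup

variable {G : Type*} [Group G] [Finite G] {p : ℕ} [hp : Fact p.Prime]

theorem exists_card_eq_sq_not_isCyclic_of_forall_pow_eq_one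
    (hdvd : p ^ 2 ∣ Nat.card G) (hG : ∀ g : G, g ^ p = 1) :
    ∃ E : Subgroup G, Nat.card E = p ^ 2 ∧ ¬ IsCyclic E := by
  obtain ⟨E, hE⟩ := Sylow.exists_subgroup_card_pow_prime p hdvd
  refine ⟨E, hE, fun hcyc => ?_⟩
  have hexp : Monoid.exponent E ∣ p :=
    Monoid.exponent_dvd_of_forall_pow_eq_one fun g => Subtype.ext (hG g)
  rw [hcyc.exponent_eq_card, hE] at hexp
  exact absurd (Nat.le_of_dvd hp.out.pos hexp) (by nlinarith [hp.out.one_lt])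

theorem exists_card_eq_sq_not_isCyclic_of_index_eq (hp2 : p ≠ 2) {M N : Subgroup G}
    [M.Normal] [N.Normal] [IsMulCommutative M] [IsMulCommutative N]
    (hM : M.index = p) (hN : N.index = p) (hMN : M ≠ N) :
    ∃ E : Subgroup G, Nat.card E = p ^ 2 ∧ ¬ IsCyclic E := by
  have hsup : M ⊔ N = ⊤ := (isCoatom_of_index_prime (hM ▸ hp.out)).sup_eq_top_of_ne
    (isCoatom_of_index_prime (hN ▸ hp.out)) hMN
  have hcenter : M ⊓ N ≤ center G := inf_le_center_of_sup_eq_top hsup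
  have hpow (g : G) : g ^ p ∈ M ⊓ N :=
    ⟨hM ▸ M.pow_index_mem g, hN ▸ N.pow_index_mem g⟩
  let f : G →* G := MonoidHom.mk' (· ^ p) (mul_pow_of_commutator_le_center
    (hp.out.odd_of_ne_two hp2) ((commutator_le_inf_of_sup_eq_top hsup).trans hcenter)
    fun g => hcenter (hpow g))
  have hrange : f.range ≤ M ⊓ N := by
    rintro _ ⟨g, rfl⟩
    exact hpow g
  have hker : p ^ 2 ∣ Nat.card f.ker := by
    simpa only [index_inf_eq_mul_of_sup_eq_top hsup, hM, hN, ← sq] using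
      index_dvd_card_ker_of_range_le hrange
  have hker_pow (g : f.ker) : g ^ p = 1 := Subtype.ext g.2
  obtain ⟨E, hE, hcyc⟩ := exists_card_eq_sq_not_isCyclic_of_forall_pow_eq_one hker hker_pow
  by_contra! h
  exact hcyc (isCyclic_subgroup_of_forall_card_eq h E hE)

theorem exists_le_index_eq_of_ne_top (hG : IsPGroup p G) {H : Subgroup G} (hH : H ≠ ⊤) :
    ∃ M : Subgroup G, H ≤ M ∧ M.index = p := by
  obtain ⟨m, hm⟩ := (hG.to_subgroup H).exists_card_eq
  obtain ⟨k, hk⟩ := hG.index H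
  have hcard : Nat.card G = p ^ (m + k) := by rw [← H.card_mul_index, hm, hk, pow_add]
  have hk0 : k ≠ 0 := by
    rintro rfl
    exact hH (index_eq_one.mp hk)
  obtain ⟨j, rfl⟩ := Nat.exists_eq_add_one_of_ne_zero hk0
  obtain ⟨M, hM, hHM⟩ := Sylow.exists_subgroup_card_pow_prime_le (m := m + j) p
    (hcard ▸ pow_dvd_pow p (by lia)) H hm (by lia)
  refine ⟨M, hHM, Nat.eq_of_mul_eq_mul_left (pow_pos hp.out.pos (m + j)) ?_⟩
  rw [← hM, card_mul_index, hcard, hM, ← pow_succ, add_assoc]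

theorem normal_of_isPGroup_of_index_eq (hG : IsPGroup p G) {M : Subgroup G} (hM : M.index = p) :
    M.Normal := by
  obtain ⟨m, hm⟩ := hG.exists_card_eq
  have hm0 : m ≠ 0 := by
    rintro rfl
    have hdvd := M.index_dvd_card
    rw [hm, hM, pow_zero] at hdvd
    exact hp.out.not_dvd_one hdvd
  apply normal_of_index_eq_minFac_card
  rw [hM, hm, hp.out.pow_minFac hm0]

theorem exists_ne_index_eq_of_not_isCyclic (hG : IsPGroup p G) (hcyc : ¬ IsCyclic G) :
    ∃ M N : Subgroup G, M ≠ N ∧ M.index = p ∧ N.index = p := by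
  have htop (x : G) : zpowers x ≠ ⊤ := fun hx =>
    hcyc (isCyclic_iff_exists_zpowers_eq_top.mpr ⟨x, hx⟩)
  obtain ⟨M, -, hM⟩ := exists_le_index_eq_of_ne_top hG (htop 1)
  obtain ⟨x, -, hx⟩ := SetLike.exists_of_lt (isCoatom_of_index_prime (hM ▸ hp.out)).lt_top
  obtain ⟨N, hxN, hN⟩ := exists_le_index_eq_of_ne_top hG (htop x)
  refine ⟨M, N, ?_, hM, hN⟩
  rintro rfl
  exact hx (hxN (mem_zpowers x))

theorem isCyclic_of_forall_card_eq_sq (hp2 : p ≠ 2) (hG : IsPGroup p G)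
    (hsq : ∀ E : Subgroup G, Nat.card E = p ^ 2 → IsCyclic E) : IsCyclic G := by
  induction hn : Nat.card G using Nat.strong_induction_on generalizing G with
  | _ n ih =>
  have hcyc (M : Subgroup G) (hM : M.index = p) : IsCyclic M := by
    refine ih _ ?_ (hG.to_subgroup M) (fun E => isCyclic_subgroup_of_forall_card_eq hsq E) rfl
    rw [← hn, ← M.card_mul_index, hM]
    exact lt_mul_of_one_lt_right Nat.card_pos hp.out.one_lt
  by_contra hGcyc
  obtain ⟨M, N, hMN, hM, hN⟩ := exists_ne_index_eq_of_not_isCyclic hG hGcyc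
  have := normal_of_isPGroup_of_index_eq hG hM
  have := normal_of_isPGroup_of_index_eq hG hN
  have := hcyc M hM
  have := hcyc N hN
  obtain ⟨E, hE, hEcyc⟩ := exists_card_eq_sq_not_isCyclic_of_index_eq hp2 hM hN hMN
  exact hEcyc (hsq E hE)

end PGroup

section ZGroup

variable {G : Type*} [Group G] [Finite G]

theorem not_four_dvd_card (h4 : ∀ g : G, orderOf g ≠ 4)
    (hsq : ∀ E : Subgroup G, Nat.card E = 4 → IsCyclic E) : ¬ 4 ∣ Nat.card G := by
  intro hdvd
  obtain ⟨E, hE⟩ := Sylow.exists_subgroup_card_pow_prime (n := 2) 2 hdvd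
  obtain ⟨g, hg⟩ := (hsq E hE).exists_ofOrder_eq_natCard
  exact h4 g (by rw [orderOf_coe, hg, hE]; rfl)

theorem isZGroup_of_forall_card_eq_sq (h4 : ∀ g : G, orderOf g ≠ 4)
    (hsq : ∀ p : ℕ, p.Prime → ∀ E : Subgroup G, Nat.card E = p ^ 2 → IsCyclic E) : IsZGroup G := by
  refine ⟨fun p hp P => ?_⟩
  have := Fact.mk hp
  rcases eq_or_ne p 2 with rfl | hp2
  · obtain ⟨k, hk⟩ := P.2.exists_card_eq
    have hk2 : k < 2 := by
      by_contra! h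
      exact not_four_dvd_card h4 (hsq 2 hp)
        ((pow_dvd_pow 2 h).trans (hk ▸ P.1.card_subgroup_dvd_card))
    apply isCyclic_of_card_dvd_prime (p := 2)
    rw [hk]
    exact pow_dvd_pow 2 (Nat.le_of_lt_succ hk2)
  · exact isCyclic_of_forall_card_eq_sq hp2 P.2 fun E =>
      isCyclic_subgroup_of_forall_card_eq (hsq p hp) E

theorem exists_isComplement'_isCyclic_coprime [IsZGroup G] :
    ∃ A B : Subgroup G, A.Normal ∧ IsCyclic A ∧ IsCyclic B ∧ IsComplement' A B ∧
      (Nat.card A).Coprime (Nat.card B) ∧ (A = ⊥ → B = ⊥) := by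
  obtain ⟨B, hB⟩ := exists_right_complement'_of_coprime (IsZGroup.coprime_commutator_index G)
  have e : Abelianization G ≃* B := hB.symm.QuotientMulEquiv
  have hBcyc : IsCyclic B := isCyclic_of_surjective _ e.surjective
  by_cases hG : commutator G = ⊥
  -- `A = commutator G` is excluded here, since a nontrivial `B` cannot act faithfully on `⊥`.
  · have hBtop : B = ⊤ := by simpa only [hG, bot_sup_eq] using hB.sup_eq_top
    subst hBtop
    exact ⟨⊤, ⊥, inferInstance, hBcyc, inferInstance, isComplement'_top_bot, by simp,
      fun _ => rfl⟩
  · refine ⟨commutator G, B, inferInstance, IsZGroup.isCyclic_commutator G, hBcyc, hB, ?_,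
      fun h => absurd h hG⟩
    exact Nat.card_congr e.toEquiv ▸ IsZGroup.coprime_commutator_index G

end ZGroup

section PrimePowerOrders

theorem eq_one_or_eq_one_of_isPrimePow_mul {a b : ℕ} (h : IsPrimePow (a * b))
    (hab : a.Coprime b) : a = 1 ∨ b = 1 := by
  rcases (hab.isPrimePow_dvd_mul h).mp dvd_rfl with hdvd | hdvd
  · exact .inr (hab.symm.eq_one_of_dvd ((dvd_mul_left b a).trans hdvd))
  · exact .inl (hab.eq_one_of_dvd ((dvd_mul_right a b).trans hdvd))

theorem eq_two_or_odd_of_isPrimePow {n : ℕ} (hn : IsPrimePow n) (h4 : ¬ 4 ∣ n) :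
    n = 2 ∨ Odd n := by
  obtain ⟨q, k, hq, hk, rfl⟩ := (isPrimePow_nat_iff n).mp hn
  rcases hq.eq_two_or_odd' with rfl | hodd
  · have hk2 : k < 2 := by
      by_contra! h
      exact h4 (pow_dvd_pow 2 h)
    obtain rfl : k = 1 := by lia
    exact .inl rfl
  · exact .inr hodd.pow

variable {G : Type*} [Group G]

theorem eq_one_or_eq_one_of_commute_of_coprime (hpp : ∀ g : G, g ≠ 1 → IsPrimePow (orderOf g))
    {a b : G} (hcomm : Commute a b) (hcop : (orderOf a).Coprime (orderOf b)) :
    a = 1 ∨ b = 1 := by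
  have hmul := hcomm.orderOf_mul_eq_mul_orderOf_of_coprime hcop
  by_cases hab : a * b = 1
  · rw [hab, orderOf_one] at hmul
    exact .inl (orderOf_eq_one_iff.mp (Nat.eq_one_of_mul_eq_one_right hmul.symm))
  · exact (eq_one_or_eq_one_of_isPrimePow_mul (hmul ▸ hpp _ hab) hcop).imp
      orderOf_eq_one_iff.mp orderOf_eq_one_iff.mp

theorem eq_one_of_forall_conj_eq_of_coprime (hpp : ∀ g : G, g ≠ 1 → IsPrimePow (orderOf g))
    {A B : Subgroup G} [IsCyclic A] (hA : A ≠ ⊥) (hcop : (Nat.card A).Coprime (Nat.card B))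
    {b : G} (hb : b ∈ B) (hconj : ∀ a ∈ A, b * a * b⁻¹ = a) : b = 1 := by
  obtain ⟨a, ha⟩ := IsCyclic.exists_ofOrder_eq_natCard (α := A)
  have hcomm : Commute (a : G) b := (mul_inv_eq_iff_eq_mul.mp (hconj a a.2)).symm
  have hab : (orderOf (a : G)).Coprime (orderOf b) := by
    rw [orderOf_coe, ha]
    exact hcop.coprime_dvd_right (orderOf_dvd_natCard B hb)
  refine (eq_one_or_eq_one_of_commute_of_coprime hpp hcomm hab).resolve_left fun ha1 => hA ?_
  rw [← card_eq_one, ← ha, ← orderOf_coe, ha1, orderOf_one]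

theorem card_eq_one_or_two_or_odd_isPrimePow (hpp : ∀ g : G, g ≠ 1 → IsPrimePow (orderOf g))
    (h4 : ¬ 4 ∣ Nat.card G) (H : Subgroup G) [IsCyclic H] :
    Nat.card H = 1 ∨ Nat.card H = 2 ∨ (IsPrimePow (Nat.card H) ∧ Odd (Nat.card H)) := by
  obtain ⟨g, hg⟩ := IsCyclic.exists_ofOrder_eq_natCard (α := H)
  rw [← orderOf_coe] at hg
  by_cases hg1 : (g : G) = 1
  · exact .inl (by rw [← hg, hg1, orderOf_one])
  · have hH : IsPrimePow (Nat.card H) := hg ▸ hpp g hg1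
    have h4H : ¬ 4 ∣ Nat.card H := fun h => h4 (h.trans H.card_subgroup_dvd_card)
    exact .inr ((eq_two_or_odd_of_isPrimePow hH h4H).imp_right fun hodd => ⟨hH, hodd⟩)

end PrimePowerOrders

/-- Let `G` be a finite group in which every abelian subgroup is cyclic, no element has
order `4`, and every element has prime power order. Then `G = A ⋊ B` with `A`, `B`
cyclic of coprime orders, each order being `1`, `2`, or an odd prime power, and with
`B` acting faithfully on `A` by conjugation. -/
theorem stmt19 {G : Type*} [Group G] [Finite G]
    (hab : ∀ H : Subgroup G, (∀ a b : H, a * b = b * a) → IsCyclic H)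
    (h4 : ∀ g : G, orderOf g ≠ 4)
    (hpp : ∀ g : G, g ≠ 1 → IsPrimePow (orderOf g)) :
    ∃ A B : Subgroup G, A.Normal ∧ IsCyclic A ∧ IsCyclic B ∧
      A ⊓ B = ⊥ ∧ A ⊔ B = ⊤ ∧
      Nat.Coprime (Nat.card A) (Nat.card B) ∧
      (Nat.card A = 1 ∨ Nat.card A = 2 ∨ (IsPrimePow (Nat.card A) ∧ Odd (Nat.card A))) ∧
      (Nat.card B = 1 ∨ Nat.card B = 2 ∨ (IsPrimePow (Nat.card B) ∧ Odd (Nat.card B))) ∧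
      (∀ b ∈ B, (∀ a ∈ A, b * a * b⁻¹ = a) → b = 1) := by
  have hsq (p : ℕ) (hp : p.Prime) (E : Subgroup G) (hE : Nat.card E = p ^ 2) : IsCyclic E :=
    have := Fact.mk hp
    have := IsPGroup.isMulCommutative_of_card_eq_prime_sq hE
    hab E mul_comm'
  have hcard := card_eq_one_or_two_or_odd_isPrimePow hpp
    (not_four_dvd_card h4 (hsq 2 Nat.prime_two))
  have : IsZGroup G := isZGroup_of_forall_card_eq_sq h4 hsq
  obtain ⟨A, B, hnormal, hA, hB, hcompl, hcop, hbot⟩ :=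
    exists_isComplement'_isCyclic_coprime (G := G)
  refine ⟨A, B, hnormal, hA, hB, hcompl.disjoint.eq_bot, hcompl.sup_eq_top, hcop, hcard A, hcard B,
    fun b hb hconj => ?_⟩
  by_cases hA1 : A = ⊥
  · rwa [hbot hA1, mem_bot] at hb
  · exact eq_one_of_forall_conj_eq_of_coprime hpp hA1 hcop hb hconj
end
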